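/- Let η ∈ ℂ be a primitive e-th root of unity with e > 1, let v_0, …, v_{l−1} be integers, and let λ = (λ^0, …, λ^{l−1}) be an l-partition of n. Then the complex number (−1)^{n(l−1)} η^{−n(λ̄)} · ∏_{s=0}^{l−1} ∏_{(i,j)∈[λ^s]} ( [h_{i,j}^{λ^s,λ^s}]_η · ∏_{0≤t≤l−1, t≠s} (η^{h_{i,j}^{λ^s,λ^t} + v_s − v_t} − 1) ) is nonzero if and only if for all 0 ≤ s, t ≤ l−1 and all (i,j) ∈ [λ^s], e does not divide h_{i,j}^{λ^s,λ^t} + v_s − v_t. (This number is the image of the Schur element s_λ under the specialisation θ(q) = η, θ(Q_j) = η^{v_j}, and its nonvanishing characterises the l-partitions λ lying in a block of defect 0.) -/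

import Mathlib

/-- A partition, encoded as a weakly decreasing, eventually-zero sequence of
natural numbers; `parts i` is the `(i+1)`-st part `λ_{i+1}` (0-indexed rows). -/
structure Ptn where
  parts : ℕ → ℕ
  antitone' : Antitone parts
  eventually_zero : ∃ N, ∀ i, N ≤ i → parts i = 0

namespace Ptn

/-- `conj p k` is the conjugate-partition part `λ'_{k+1} = #{i ≥ 1 : λ_i ≥ k+1}`. -/
noncomputable def conj (p : Ptn) (k : ℕ) : ℕ := Nat.card {i : ℕ // k < p.parts i}

/-- `|λ| = Σ_{i ≥ 1} λ_i`. -/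
noncomputable def size (p : Ptn) : ℕ := ∑ᶠ i, p.parts i

/-- `n(λ) = Σ_{i ≥ 1} (i-1) λ_i`. -/
noncomputable def nn (p : Ptn) : ℕ := ∑ᶠ i, i * p.parts i

/-- The empty partition. -/
def empty : Ptn := ⟨fun _ => 0, fun _ _ _ => le_rfl, ⟨0, fun _ _ => rfl⟩⟩

end Ptn

/-- The generalised hook length `h_{i,j}^{λ,μ} = λ_i - i + μ'_j - j + 1`, for the node
in (0-indexed) row `i` and column `j`, i.e. the 1-indexed node `(i+1, j+1)`. -/
noncomputable def ghook (lam mu : Ptn) (i j : ℕ) : ℤ :=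
  (lam.parts i : ℤ) - (i + 1) + (mu.conj j : ℤ) - (j + 1) + 1

/-!
The prefactor is a unit, so the product is nonzero iff every node contributes a nonzero factor.
For a node of `λ^s`, the factors with `t ≠ s` vanish exactly when `e` divides the shifted hook
length. The remaining factor is a quantum integer of a genuine hook length, which is positive, and
`[h]_η (η - 1) = η ^ h - 1` with `η ≠ 1` shows that it vanishes under the same condition for
`t = s`, where the shift `v_s - v_t` is zero.
-/

theorem finprod_ne_zero_iff {α M₀ : Type*} [CommMonoidWithZero M₀] [Nontrivial M₀]
    [NoZeroDivisors M₀] {f : α → M₀} (hf : f.HasFiniteMulSupport) :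
    ∏ᶠ a, f a ≠ 0 ↔ ∀ a, f a ≠ 0 :=
  ⟨fun h a ha => h (finprod_eq_zero f a ha hf), finprod_ne_zero⟩

namespace Ptn

theorem lt_conj_iff (p : Ptn) {i j : ℕ} : i < p.conj j ↔ j < p.parts i := by
  have hex : ∃ m, p.parts m ≤ j :=
    let ⟨N, hN⟩ := p.eventually_zero
    ⟨N, (hN N le_rfl).trans_le j.zero_le⟩
  have hfind : ∀ i, i < Nat.find hex ↔ j < p.parts i := fun i => by
    rw [Nat.lt_find_iff]
    exact ⟨fun h => not_le.mp (h i le_rfl), fun h m hm => not_le.mpr (h.trans_le (p.antitone' hm))⟩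
  have hconj : p.conj j = Nat.find hex := by
    simp only [conj, ← hfind]
    exact Set.ncard_Iio_nat _
  rw [hconj, hfind]

theorem hasFiniteMulSupport_prod_range_parts {M : Type*} [CommMonoid M] (p : Ptn)
    (f : ℕ → ℕ → M) :
    (fun i => ∏ j ∈ Finset.range (p.parts i), f i j).HasFiniteMulSupport := by
  obtain ⟨N, hN⟩ := p.eventually_zero
  refine (Set.finite_Iio N).subset fun i hi => ?_
  by_contra hiN
  have hparts : p.parts i = 0 := hN i (not_lt.mp hiN)
  exact hi (by simp only [hparts, Finset.prod_range_zero])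

theorem finprod_prod_range_parts_ne_zero_iff {M₀ : Type*} [CommMonoidWithZero M₀]
    [Nontrivial M₀] [NoZeroDivisors M₀] (p : Ptn) (f : ℕ → ℕ → M₀) :
    ∏ᶠ i, ∏ j ∈ Finset.range (p.parts i), f i j ≠ 0 ↔ ∀ i j, j < p.parts i → f i j ≠ 0 := by
  simp only [finprod_ne_zero_iff (p.hasFiniteMulSupport_prod_range_parts f),
    Finset.prod_ne_zero_iff, Finset.mem_range]

end Ptn

theorem ghook_self_pos (p : Ptn) {i j : ℕ} (hj : j < p.parts i) : 0 < ghook p p i j := by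
  have hi : i < p.conj j := p.lt_conj_iff.mpr hj
  unfold ghook
  lia

theorem geom_sum_eq_zero_iff_dvd {e : ℕ} {R : Type*} [CommRing R] [NoZeroDivisors R] {η : R}
    (hη : IsPrimitiveRoot η e) (he : e ≠ 1) (m : ℕ) :
    ∑ a ∈ Finset.range m, η ^ a = 0 ↔ e ∣ m := by
  have hη1 : η - 1 ≠ 0 :=
    sub_ne_zero.mpr fun h => he (hη.unique (h ▸ IsPrimitiveRoot.one))
  rw [← hη.pow_eq_one_iff_dvd, ← sub_eq_zero (a := η ^ m), ← geom_sum_mul, mul_eq_zero,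
    or_iff_left hη1]

theorem geom_sum_mul_prod_erase_ne_zero_iff {e : ℕ} {ι K : Type*} [Fintype ι] [DecidableEq ι]
    [Field K] {η : K} (hη : IsPrimitiveRoot η e) (he : e ≠ 1) (c : ι → ℤ) {s : ι} {m : ℕ}
    (hm : c s = m) :
    (∑ a ∈ Finset.range m, η ^ a) * ∏ t ∈ Finset.univ.erase s, (η ^ c t - 1) ≠ 0 ↔
      ∀ t, ¬ (e : ℤ) ∣ c t := by
  have hsum : ∑ a ∈ Finset.range m, η ^ a ≠ 0 ↔ ¬ (e : ℤ) ∣ c s := by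
    rw [ne_eq, geom_sum_eq_zero_iff_dvd hη he, hm, Int.natCast_dvd_natCast]
  have hprod : ∏ t ∈ Finset.univ.erase s, (η ^ c t - 1) ≠ 0 ↔ ∀ t ≠ s, ¬ (e : ℤ) ∣ c t := by
    simp only [Finset.prod_ne_zero_iff, Finset.mem_erase, Finset.mem_univ, and_true, sub_ne_zero,
      ne_eq, hη.zpow_eq_one_iff_dvd]
  rw [mul_ne_zero_iff, hsum, hprod]
  refine ⟨fun ⟨hs, hne⟩ t => ?_, fun h => ⟨h s, fun t _ => h t⟩⟩
  obtain rfl | hts := eq_or_ne t s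
  exacts [hs, hne t hts]

/-- Taking `e = 0` covers the generic case, in which `η` is not a root of unity. -/
theorem stmt12_general {ι K : Type*} [Fintype ι] [DecidableEq ι] [Field K] (n e : ℕ) (he : e ≠ 1)
    (η : K) (hη0 : η ≠ 0) (hη : IsPrimitiveRoot η e) (v : ι → ℤ) (Λ : ι → Ptn)
    (hn : ∑ s, (Λ s).size = n) (b : Ptn) (hb : ∀ k, b.conj k = ∑ s, (Λ s).conj k) :
    ((-1 : K) ^ (n * (Fintype.card ι - 1)) * η ^ (-(b.nn : ℤ)) *
        ∏ s, ∏ᶠ i, ∏ j ∈ Finset.range ((Λ s).parts i),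
          ((∑ a ∈ Finset.range (ghook (Λ s) (Λ s) i j).toNat, η ^ a) *
            ∏ t ∈ Finset.univ.erase s,
              (η ^ (ghook (Λ s) (Λ t) i j + v s - v t) - 1))) ≠ 0
    ↔ ∀ (s t : ι) (i j : ℕ), j < (Λ s).parts i →
        ¬ ((e : ℤ) ∣ ghook (Λ s) (Λ t) i j + v s - v t) := by
  have hunit : (-1 : K) ^ (n * (Fintype.card ι - 1)) * η ^ (-(b.nn : ℤ)) ≠ 0 :=
    mul_ne_zero (pow_ne_zero _ (neg_ne_zero.mpr one_ne_zero)) (zpow_ne_zero _ hη0)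
  have hnode (s : ι) {i j : ℕ} (hj : j < (Λ s).parts i) :=
    geom_sum_mul_prod_erase_ne_zero_iff hη he (fun t => ghook (Λ s) (Λ t) i j + v s - v t)
      (s := s) (m := (ghook (Λ s) (Λ s) i j).toNat)
      (by rw [add_sub_cancel_right, Int.toNat_of_nonneg (ghook_self_pos _ hj).le])
  simp only [mul_ne_zero_iff_left hunit, Finset.prod_ne_zero_iff, Finset.mem_univ, forall_const,
    Ptn.finprod_prod_range_parts_ne_zero_iff]
  exact ⟨fun h s t i j hj => (hnode s hj).mp (h s i j hj) t,
    fun h s i j hj => (hnode s hj).mpr fun t => h s t i j hj⟩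

/-- **blocks of defect 0.** Let `η ∈ ℂ` be a primitive `e`-th root of unity,
`e > 1`, `v_0, …, v_{l-1} ∈ ℤ`, and `λ` an `l`-partition of `n` (with `λ̄` its rearrangement
of parts, characterised by `λ̄'_k = Σ_s λ^{s'}_k`). Then
`(-1)^{n(l-1)} η^{-n(λ̄)} ∏_s ∏_{(i,j)∈[λ^s]} ([h^{λ^s,λ^s}_{i,j}]_η
  ∏_{t≠s} (η^{h^{λ^s,λ^t}_{i,j}+v_s-v_t} - 1)) ≠ 0`
iff for all `s, t` and all nodes `(i,j)` of `λ^s`, `e ∤ h^{λ^s,λ^t}_{i,j} + v_s - v_t`.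
Here `[m]_η = η^{m-1} + ⋯ + η + 1`. -/
theorem stmt12 (l n e : ℕ) (he : 1 < e) (η : ℂ) (hη : IsPrimitiveRoot η e)
    (v : Fin l → ℤ) (Λ : Fin l → Ptn) (hn : ∑ s, (Λ s).size = n)
    (b : Ptn) (hb : ∀ k, b.conj k = ∑ s, (Λ s).conj k) :
    ((-1 : ℂ) ^ (n * (l - 1)) * η ^ (-(b.nn : ℤ)) *
        ∏ s, ∏ᶠ i, ∏ j ∈ Finset.range ((Λ s).parts i),
          ((∑ a ∈ Finset.range (ghook (Λ s) (Λ s) i j).toNat, η ^ a) *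
            ∏ t ∈ Finset.univ.erase s,
              (η ^ (ghook (Λ s) (Λ t) i j + v s - v t) - 1))) ≠ 0
    ↔ ∀ (s t : Fin l) (i j : ℕ), j < (Λ s).parts i →
        ¬ ((e : ℤ) ∣ ghook (Λ s) (Λ t) i j + v s - v t) := by
  simpa only [Fintype.card_fin] using
    stmt12_general n e he.ne' η (hη.ne_zero (by lia)) hη v Λ hn b hb
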